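/- arXiv:1503.04048 — 4 statements merged into one kernel-verified Lean document; each statement's English description precedes it below -/
import Mathlib

section
/- Let D=(V,A) be a digraph. Then the secure domination number of the underlying undirected graph and the out-domination number of D are both at most the out-secure domination number and the secure out-domination number of D; and both the out-secure domination number and the secure out-domination number of D are at most the out-secure out-domination number and the in-secure out-domination number of D. That is: γ_s(G) ≤ γ_os(D), γ_s(G) ≤ γ_so(D), γ⁺(D) ≤ γ_os(D), γ⁺(D) ≤ γ_so(D), γ_os(D) ≤ γ_oso(D), γ_so(D) ≤ γ_oso(D), and γ_so(D) ≤ γ_iso(D). Moreover, if D has no symmetric arcs (no pair of opposite arcs), then also γ_os(D) ≤ γ_iso(D). -/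
open Finset

variable {V : Type*}

/-- `S` is an out-dominating set of the digraph with arc relation `A`. -/
def OutDom (A : V → V → Prop) (S : Finset V) : Prop :=
  ∀ v : V, v ∉ S → ∃ u ∈ S, A u v

/-- `S` is an in-dominating set. -/
def InDom (A : V → V → Prop) (S : Finset V) : Prop :=
  ∀ v : V, v ∉ S → ∃ u ∈ S, A v u

/-- `S` is a dominating set of the underlying undirected graph of the digraph `A`. -/
def DomG (A : V → V → Prop) (S : Finset V) : Prop :=
  ∀ v : V, v ∉ S → ∃ u ∈ S, A u v ∨ A v u

/-- Secure dominating set of the underlying undirected graph. -/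
def SDS [DecidableEq V] (A : V → V → Prop) (S : Finset V) : Prop :=
  DomG A S ∧ ∀ v : V, v ∉ S → ∃ u ∈ S, (A u v ∨ A v u) ∧ DomG A (insert v (S.erase u))

/-- Out-secure dominating set (OSDS). -/
def OSDS [DecidableEq V] (A : V → V → Prop) (S : Finset V) : Prop :=
  DomG A S ∧ ∀ v : V, v ∉ S → ∃ u ∈ S, A u v ∧ DomG A (insert v (S.erase u))

/-- Secure out-dominating set (SODS). -/
def SODS [DecidableEq V] (A : V → V → Prop) (S : Finset V) : Prop :=
  OutDom A S ∧ ∀ v : V, v ∉ S → ∃ u ∈ S, (A v u ∨ A u v) ∧ OutDom A (insert v (S.erase u))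

/-- Out-secure out-dominating set (OSODS). -/
def OSODS [DecidableEq V] (A : V → V → Prop) (S : Finset V) : Prop :=
  OutDom A S ∧ ∀ v : V, v ∉ S → ∃ u ∈ S, A u v ∧ OutDom A (insert v (S.erase u))

/-- In-secure out-dominating set (ISODS). -/
def ISODS [DecidableEq V] (A : V → V → Prop) (S : Finset V) : Prop :=
  OutDom A S ∧ ∀ v : V, v ∉ S → ∃ u ∈ S, A v u ∧ OutDom A (insert v (S.erase u))

/-- Twin dominating set. -/
def TwinDom (A : V → V → Prop) (S : Finset V) : Prop :=
  ∀ v : V, v ∉ S → (∃ u ∈ S, A v u) ∧ (∃ u ∈ S, A u v)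

/-- The out-domination number `γ⁺`. -/
noncomputable def gammaPlus [Fintype V] (A : V → V → Prop) : ℕ :=
  sInf {k | ∃ S : Finset V, OutDom A S ∧ S.card = k}

/-- The in-domination number `γ⁻`. -/
noncomputable def gammaMinus [Fintype V] (A : V → V → Prop) : ℕ :=
  sInf {k | ∃ S : Finset V, InDom A S ∧ S.card = k}

/-- The secure domination number of the underlying undirected graph, `γ_s`. -/
noncomputable def gammaS [Fintype V] [DecidableEq V] (A : V → V → Prop) : ℕ :=
  sInf {k | ∃ S : Finset V, SDS A S ∧ S.card = k}

/-- The out-secure domination number `γ_os`. -/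
noncomputable def gammaOS [Fintype V] [DecidableEq V] (A : V → V → Prop) : ℕ :=
  sInf {k | ∃ S : Finset V, OSDS A S ∧ S.card = k}

/-- The secure out-domination number `γ_so`. -/
noncomputable def gammaSO [Fintype V] [DecidableEq V] (A : V → V → Prop) : ℕ :=
  sInf {k | ∃ S : Finset V, SODS A S ∧ S.card = k}

/-- The out-secure out-domination number `γ_oso`. -/
noncomputable def gammaOSO [Fintype V] [DecidableEq V] (A : V → V → Prop) : ℕ :=
  sInf {k | ∃ S : Finset V, OSODS A S ∧ S.card = k}

/-- The in-secure out-domination number `γ_iso`. -/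
noncomputable def gammaISO [Fintype V] [DecidableEq V] (A : V → V → Prop) : ℕ :=
  sInf {k | ∃ S : Finset V, ISODS A S ∧ S.card = k}

/-- The twin domination number `γ*`. -/
noncomputable def gammaTwin [Fintype V] (A : V → V → Prop) : ℕ :=
  sInf {k | ∃ S : Finset V, TwinDom A S ∧ S.card = k}

/-- Out-degree `d⁺(u)`. -/
noncomputable def outDeg (A : V → V → Prop) (u : V) : ℕ := Nat.card {v | A u v}

/-- In-degree `d⁻(u)`. -/
noncomputable def inDeg (A : V → V → Prop) (u : V) : ℕ := Nat.card {v | A v u}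

/-- Maximum out-degree `Δ⁺`. -/
noncomputable def maxOutDeg [Fintype V] (A : V → V → Prop) : ℕ :=
  Finset.univ.sup fun u => outDeg A u

/-- Minimum out-degree `δ⁺`. -/
noncomputable def minOutDeg (A : V → V → Prop) : ℕ := sInf (Set.range fun u => outDeg A u)

/-- Minimum in-degree `δ⁻`. -/
noncomputable def minInDeg (A : V → V → Prop) : ℕ := sInf (Set.range fun u => inDeg A u)

/-- The set of out-private neighbors `pn⁺(u,S)`: vertices `w` with `N⁻[w] ∩ S = {u}`. -/
def pnPlus (A : V → V → Prop) (S : Finset V) (u : V) : Set V :=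
  {w | {x | A x w ∨ x = w} ∩ ↑S = {u}}

/-- The set of in-private neighbors `pn⁻(u,S)`: vertices `w` with `N⁺[w] ∩ S = {u}`. -/
def pnMinus (A : V → V → Prop) (S : Finset V) (u : V) : Set V :=
  {w | {x | A w x ∨ x = w} ∩ ↑S = {u}}

/-- `A` is an orientation of the simple graph `G`. -/
def IsOrientation (G : SimpleGraph V) (A : V → V → Prop) : Prop :=
  (∀ u v : V, G.Adj u v ↔ (A u v ∨ A v u)) ∧ (∀ u v : V, A u v → ¬ A v u)

/-- The arc relation of the directed path `P_n` on `Fin n`. -/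
def pathArc (n : ℕ) : Fin n → Fin n → Prop := fun i j => (i : ℕ) + 1 = (j : ℕ)

/-- The arc relation of the directed cycle `C_n` on `Fin n`. -/
def cycleArc (n : ℕ) : Fin n → Fin n → Prop := fun i j => ((i : ℕ) + 1) % n = (j : ℕ)

/-!
Each of the five notions of a secure set fixes who may defend a vertex and which domination has to
survive the move, and is monotone in both relations. An `OSDS` is out-dominating because its
defenders are in-neighbors. This gives every inequality but the last.

For the last one, an in-secure out-dominating set `S` leaves every outside vertex with an
in-neighbor and an out-neighbor in `S`. Without symmetric arcs these are distinct, so one of them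
survives when a single vertex leaves `S`; thus any in-neighbor in `S` of an outside vertex can
serve as its defender.
-/

/-- The least cardinality of a finite set satisfying `P`, with the junk value `0` when there is
none. The domination parameters `gammaPlus`, `gammaS`, ... are instances by definition. -/
noncomputable def minCard (P : Finset V → Prop) : ℕ :=
  sInf {k | ∃ S : Finset V, P S ∧ S.card = k}

lemma minCard_le_minCard {P Q : Finset V → Prop} (hQ : ∃ S, Q S) (h : ∀ S, Q S → P S) :
    minCard P ≤ minCard Q :=
  csInf_le_csInf' (hQ.imp' card fun S hS => ⟨S, hS, rfl⟩)
    fun _ ⟨S, hS, hcard⟩ => ⟨S, h S hS, hcard⟩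

lemma OutDom.mono {T T' : V → V → Prop} {S : Finset V} (hT : ∀ u v, T u v → T' u v)
    (h : OutDom T S) : OutDom T' S := fun v hv =>
  (h v hv).imp fun _ => And.imp_right (hT _ v)

section IsSecureDom

variable [DecidableEq V] {R R' T T' : V → V → Prop} {S : Finset V}

/-- A secure dominating set with respect to two relations: `R u v` says that `u` may defend `v`,
and `T u v` that `u` dominates `v`. As `DomG A` is `OutDom` of the symmetrized relation, `SDS`,
`OSDS`, `SODS`, `OSODS` and `ISODS` are all instances by definition. -/
def IsSecureDom (R T : V → V → Prop) (S : Finset V) : Prop :=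
  OutDom T S ∧ ∀ v : V, v ∉ S → ∃ u ∈ S, R u v ∧ OutDom T (insert v (S.erase u))

lemma IsSecureDom.mono (hR : ∀ u v, R u v → R' u v) (hT : ∀ u v, T u v → T' u v)
    (h : IsSecureDom R T S) : IsSecureDom R' T' S := by
  refine ⟨h.1.mono hT, fun v hv => ?_⟩
  obtain ⟨u, hu, huv, hdom⟩ := h.2 v hv
  exact ⟨u, hu, hR u v huv, hdom.mono hT⟩

lemma IsSecureDom.outDom_left (h : IsSecureDom R T S) : OutDom R S := fun v hv =>
  (h.2 v hv).imp fun _ => And.imp_right And.left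

lemma isSecureDom_univ [Fintype V] (R T : V → V → Prop) : IsSecureDom R T univ :=
  ⟨fun v hv => absurd (mem_univ v) hv, fun v hv => absurd (mem_univ v) hv⟩

end IsSecureDom

section Digraph

variable [DecidableEq V] {A : V → V → Prop} {S : Finset V}

lemma OSDS.sds (h : OSDS A S) : SDS A S :=
  IsSecureDom.mono (fun _ _ => Or.inl) (fun _ _ => id) h

lemma OSDS.outDom (h : OSDS A S) : OutDom A S :=
  IsSecureDom.outDom_left h

lemma SODS.sds (h : SODS A S) : SDS A S :=
  IsSecureDom.mono (fun _ _ => Or.symm) (fun _ _ => Or.inl) h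

lemma OSODS.osds (h : OSODS A S) : OSDS A S :=
  IsSecureDom.mono (fun _ _ => id) (fun _ _ => Or.inl) h

lemma OSODS.sods (h : OSODS A S) : SODS A S :=
  IsSecureDom.mono (fun _ _ => Or.inr) (fun _ _ => id) h

lemma ISODS.sods (h : ISODS A S) : SODS A S :=
  IsSecureDom.mono (fun _ _ => Or.inl) (fun _ _ => id) h

lemma ISODS.twinDom (h : ISODS A S) : TwinDom A S := fun v hv =>
  ⟨IsSecureDom.outDom_left h v hv, h.1 v hv⟩

lemma TwinDom.domG_insert_erase (hA : ∀ u v : V, A u v → ¬ A v u) (h : TwinDom A S) {u v : V}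
    (huv : A u v ∨ A v u) : DomG A (insert v (S.erase u)) := by
  intro x hx
  obtain rfl | hxu := eq_or_ne x u
  · exact ⟨v, mem_insert_self v _, huv.symm⟩
  have hxS : x ∉ S := fun hxS => hx (mem_insert_of_mem (mem_erase.2 ⟨hxu, hxS⟩))
  obtain ⟨⟨b, hbS, hxb⟩, ⟨a, haS, hax⟩⟩ := h x hxS
  have hab : a ≠ b := by
    rintro rfl
    exact hA a x hax hxb
  obtain rfl | hau := eq_or_ne a u
  · exact ⟨b, mem_insert_of_mem (mem_erase.2 ⟨hab.symm, hbS⟩), Or.inr hxb⟩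
  · exact ⟨a, mem_insert_of_mem (mem_erase.2 ⟨hau, haS⟩), Or.inl hax⟩

lemma TwinDom.osds (hA : ∀ u v : V, A u v → ¬ A v u) (h : TwinDom A S) : OSDS A S := by
  refine ⟨fun v hv => ?_, fun v hv => ?_⟩ <;> obtain ⟨u, huS, huv⟩ := (h v hv).2
  · exact ⟨u, huS, Or.inl huv⟩
  · exact ⟨u, huS, huv, h.domG_insert_erase hA (Or.inl huv)⟩

end Digraph

/-- the inequality chains between the secure domination parameters. -/
theorem stmt_0 [Fintype V] [DecidableEq V] (A : V → V → Prop) (hloop : ∀ v : V, ¬ A v v) :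
    gammaS A ≤ gammaOS A ∧ gammaS A ≤ gammaSO A ∧
    gammaPlus A ≤ gammaOS A ∧ gammaPlus A ≤ gammaSO A ∧
    gammaOS A ≤ gammaOSO A ∧ gammaSO A ≤ gammaOSO A ∧
    gammaSO A ≤ gammaISO A ∧
    ((∀ u v : V, A u v → ¬ A v u) → gammaOS A ≤ gammaISO A) := by
  have hOS : ∃ S, OSDS A S := ⟨univ, isSecureDom_univ _ _⟩
  have hSO : ∃ S, SODS A S := ⟨univ, isSecureDom_univ _ _⟩
  have hOSO : ∃ S, OSODS A S := ⟨univ, isSecureDom_univ _ _⟩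
  have hISO : ∃ S, ISODS A S := ⟨univ, isSecureDom_univ _ _⟩
  exact ⟨minCard_le_minCard hOS fun _ => OSDS.sds,
    minCard_le_minCard hSO fun _ => SODS.sds,
    minCard_le_minCard hOS fun _ => OSDS.outDom,
    minCard_le_minCard hSO fun _ => And.left,
    minCard_le_minCard hOSO fun _ => OSODS.osds,
    minCard_le_minCard hOSO fun _ => OSODS.sods,
    minCard_le_minCard hISO fun _ => ISODS.sods,
    fun hA => minCard_le_minCard hISO fun _ hS => hS.twinDom.osds hA⟩
end

section
/- For any digraph D of order n, γ_oso(D) ≤ n − δ⁰, where δ⁰ = min{δ⁺, δ⁻} is the minimum of the minimum out-degree and the minimum in-degree of D. -/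
open Finset

variable {V : Type*}

/-!
Every set `S` with at most `δ⁻` vertices outside it is out-dominating: if `v ∉ S` had no in-neighbor
in `S`, then, since there is no loop at `v`, its in-neighbors would form a proper subset of the
complement of `S`, so there would be fewer than `δ⁻` of them. The swap in the definition of an OSODS
preserves the cardinality, so `S` is also an OSODS.
-/

lemma minInDeg_le_inDeg (A : V → V → Prop) (v : V) : minInDeg A ≤ inDeg A v :=
  Nat.sInf_le ⟨v, rfl⟩

section

variable {A : V → V → Prop} {S : Finset V}

lemma exists_mem_arc_of_card_compl_le_inDeg [Fintype V] [DecidableEq V] {v : V}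
    (hloop : ¬ A v v) (hv : v ∉ S) (hcard : #Sᶜ ≤ inDeg A v) : ∃ u ∈ S, A u v := by
  by_contra! hnone
  have hssub : {u | A u v} ⊂ (↑Sᶜ : Set V) :=
    Set.ssubset_iff_exists.mpr
      ⟨fun u huv => mem_coe.mpr (mem_compl.mpr fun hu => hnone u hu huv),
        v, mem_coe.mpr (mem_compl.mpr hv), hloop⟩
  have hlt : inDeg A v < #Sᶜ := (Set.ncard_lt_ncard hssub).trans_eq (Set.ncard_coe_finset _)
  exact hlt.not_ge hcard

lemma OutDom.of_card_compl_le_minInDeg [Fintype V] [DecidableEq V] (hloop : ∀ v, ¬ A v v)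
    (hcard : #Sᶜ ≤ minInDeg A) : OutDom A S := fun v hv =>
  exists_mem_arc_of_card_compl_le_inDeg (hloop v) hv (hcard.trans (minInDeg_le_inDeg A v))

lemma OSODS.of_forall_card_eq_outDom [DecidableEq V] (h : ∀ T : Finset V, #T = #S → OutDom A T) :
    OSODS A S := by
  refine ⟨h S rfl, fun v hv => ?_⟩
  obtain ⟨u, hu, huv⟩ := h S rfl v hv
  have hswap : #(insert v (S.erase u)) = #S := by
    rw [card_insert_of_notMem (fun hmem => hv (mem_of_mem_erase hmem)), card_erase_add_one hu]
  exact ⟨u, hu, huv, h _ hswap⟩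

lemma OSODS.of_card_compl_le_minInDeg [Fintype V] [DecidableEq V] (hloop : ∀ v, ¬ A v v)
    (hcard : #Sᶜ ≤ minInDeg A) : OSODS A S :=
  .of_forall_card_eq_outDom fun T hT =>
    .of_card_compl_le_minInDeg hloop <| by rwa [card_compl, hT, ← card_compl]

lemma OSODS.gammaOSO_le_card [Fintype V] [DecidableEq V] (h : OSODS A S) : gammaOSO A ≤ #S :=
  Nat.sInf_le ⟨S, h, rfl⟩

end

theorem stmt_3_general [Fintype V] [DecidableEq V] (A : V → V → Prop) (hloop : ∀ v : V, ¬ A v v) :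
    gammaOSO A ≤ Fintype.card V - minInDeg A := by
  obtain ⟨S, -, hS⟩ := exists_subset_card_eq (s := (univ : Finset V))
    (show Fintype.card V - minInDeg A ≤ #univ from Nat.sub_le _ _)
  have hcompl : #Sᶜ ≤ minInDeg A := by simpa only [card_compl, hS] using tsub_tsub_le
  exact (OSODS.of_card_compl_le_minInDeg hloop hcompl).gammaOSO_le_card.trans_eq hS

/-- `γ_oso(D) ≤ n − δ⁰`. -/
theorem stmt_3 [Fintype V] [DecidableEq V] (A : V → V → Prop) (hloop : ∀ v : V, ¬ A v v) :
    gammaOSO A ≤ Fintype.card V - min (minOutDeg A) (minInDeg A) := by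
  exact (stmt_3_general A hloop).trans (Nat.sub_le_sub_left (min_le_right _ _) _)
end

section
/- For the directed cycle C_n = (v₁, v₂, ..., v_n, v₁) with n ≥ 3 vertices, γ_oso(C_n) = ⌈2n/3⌉. -/
open Finset

variable {V : Type*}

/-!
In the directed cycle, a vertex `u ∈ S` is the only possible defender of its successor and of no
other vertex. Hence moving `u` to a successor outside `S` can expose no vertex but `u` itself, and
`S` is an out-secure out-dominating set exactly when it contains the two predecessors of every
vertex it omits. The two predecessor maps embed disjoint copies of the complement into `S`, so
`2 (n - |S|) ≤ |S|`; omitting every third vertex attains the resulting bound.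
-/

section UniquePredecessor

variable {A : V → V → Prop} {p : V → V} {S : Finset V}

theorem outDom_iff_pred_mem (hA : ∀ u v, A u v ↔ u = p v) :
    OutDom A S ↔ ∀ v ∉ S, p v ∈ S := by
  simp only [OutDom, hA, exists_eq_right]

theorem two_mul_card_le_of_two_preds_mem [Fintype V] (hp : p.Injective)
    (h : ∀ v ∉ S, p v ∈ S ∧ p (p v) ∈ S) : 2 * Fintype.card V ≤ 3 * #S := by
  classical
  have disjoint_preds : Disjoint (Sᶜ.image p) (Sᶜ.image (p ∘ p)) := by
    simp only [disjoint_left, mem_image, mem_compl]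
    rintro _ ⟨v, hv, rfl⟩ ⟨w, hw, hwv⟩
    exact hv (hp hwv ▸ (h w hw).1)
  have preds_subset : Sᶜ.image p ∪ Sᶜ.image (p ∘ p) ⊆ S := by
    simp only [union_subset_iff, image_subset_iff, mem_compl]
    exact ⟨fun v hv => (h v hv).1, fun v hv => (h v hv).2⟩
  have card_compl_add : #Sᶜ + #Sᶜ ≤ #S := by
    simpa only [card_union_of_disjoint disjoint_preds, card_image_of_injective _ hp,
      card_image_of_injective _ (hp.comp hp)] using card_le_card preds_subset
  have := S.card_add_card_compl
  omega

variable [DecidableEq V]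

theorem OutDom.insert_erase_pred_iff (hA : ∀ u v, A u v ↔ u = p v) (hp : p.Injective)
    (hp₂ : ∀ v, p (p v) ≠ v) (hS : OutDom A S) {v : V} (hv : v ∉ S) :
    OutDom A (insert v (S.erase (p v))) ↔ p (p v) ∈ S := by
  have pred_mem := (outDom_iff_pred_mem hA).1 hS
  have pred_ne_self : p v ≠ v := fun h => hv (h ▸ pred_mem v hv)
  simp only [outDom_iff_pred_mem hA, mem_insert, mem_erase]
  constructor
  · intro h
    exact ((h (p v) (by simp [pred_ne_self])).resolve_left (hp₂ v)).2
  · intro hppv w hw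
    obtain ⟨hwv, hw⟩ := not_or.1 hw
    refine Or.inr ⟨hp.ne hwv, ?_⟩
    by_cases hwS : w ∈ S
    · obtain rfl : w = p v := by_contra fun hne => hw ⟨hne, hwS⟩
      exact hppv
    · exact pred_mem w hwS

theorem osods_iff_two_preds_mem (hA : ∀ u v, A u v ↔ u = p v) (hp : p.Injective)
    (hp₂ : ∀ v, p (p v) ≠ v) :
    OSODS A S ↔ ∀ v ∉ S, p v ∈ S ∧ p (p v) ∈ S := by
  constructor
  · rintro ⟨hS, h⟩ v hv
    obtain ⟨u, hu, huv, hswap⟩ := h v hv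
    obtain rfl := (hA u v).1 huv
    exact ⟨hu, (hS.insert_erase_pred_iff hA hp hp₂ hv).1 hswap⟩
  · intro h
    have hS : OutDom A S := (outDom_iff_pred_mem hA).2 fun v hv => (h v hv).1
    exact ⟨hS, fun v hv => ⟨p v, (h v hv).1, (hA _ v).2 rfl,
      (hS.insert_erase_pred_iff hA hp hp₂ hv).2 (h v hv).2⟩⟩

end UniquePredecessor

theorem gammaOSO_eq_card_of_forall_card_le [Fintype V] [DecidableEq V] {A : V → V → Prop}
    {S : Finset V} (hS : OSODS A S) (hmin : ∀ T, OSODS A T → #S ≤ #T) : gammaOSO A = #S := by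
  have : IsLeast {k | ∃ T, OSODS A T ∧ #T = k} #S :=
    ⟨⟨S, hS, rfl⟩, by rintro _ ⟨T, hT, rfl⟩; exact hmin T hT⟩
  exact this.csInf_eq

section Cycle

variable {n : ℕ}

theorem cycleArc_iff [NeZero n] (u v : Fin n) : cycleArc n u v ↔ u = v - 1 := by
  rw [eq_sub_iff_add_eq, Fin.ext_iff, Fin.val_add, Fin.val_one', Nat.add_mod_mod, cycleArc]

theorem fin_sub_one_sub_one_ne_self [NeZero n] (hn : 3 ≤ n) (v : Fin n) : v - 1 - 1 ≠ v := by
  rw [sub_sub, Ne, sub_eq_self, Fin.ext_iff, Fin.val_add, Fin.val_one', ← Nat.add_mod]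
  simp [Nat.mod_eq_of_lt hn]

theorem osods_cycleArc_iff [NeZero n] (hn : 3 ≤ n) {S : Finset (Fin n)} :
    OSODS (cycleArc n) S ↔ ∀ v ∉ S, v - 1 ∈ S ∧ v - 1 - 1 ∈ S :=
  osods_iff_two_preds_mem cycleArc_iff sub_left_injective (fin_sub_one_sub_one_ne_self hn)

/-- The extremal set in `C_n`, consisting of the `v_i` with `3 ∤ i`; the vertex `v_i` is
`i - 1 : Fin n`. Starting with two kept vertices makes the pattern fit where the cycle closes up,
whatever `n` is modulo `3`. -/
def omitEveryThird (n : ℕ) : Finset (Fin n) := {v | (v : ℕ) % 3 ≠ 2}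

theorem mem_omitEveryThird {v : Fin n} : v ∈ omitEveryThird n ↔ (v : ℕ) % 3 ≠ 2 := by
  simp [omitEveryThird]

theorem card_omitEveryThird (n : ℕ) : #(omitEveryThird n) = (2 * n) ⌈/⌉ 3 := by
  induction n with
  | zero => rfl
  | succ n ih =>
    simp only [omitEveryThird, card_filter, Nat.ceilDiv_eq_add_pred_div] at ih ⊢
    rw [Fin.sum_univ_castSucc]
    simp only [Fin.val_castSucc, ih, Fin.val_last]
    have : n % 3 = 0 ∨ n % 3 = 1 ∨ n % 3 = 2 := by omega
    split_ifs <;> omega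

theorem osods_omitEveryThird (hn : 3 ≤ n) : OSODS (cycleArc n) (omitEveryThird n) := by
  have : NeZero n := ⟨by omega⟩
  simp only [osods_cycleArc_iff hn, mem_omitEveryThird, not_not]
  intro v hv
  have val_pred : ((v - 1 : Fin n) : ℕ) = v - 1 :=
    Fin.val_sub_one_of_ne_zero (by intro h₀; simp [h₀] at hv)
  have val_pred_pred : ((v - 1 - 1 : Fin n) : ℕ) = v - 1 - 1 := by
    rw [Fin.val_sub_one_of_ne_zero, val_pred]
    rw [Ne, Fin.ext_iff, val_pred, Fin.val_zero]
    omega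
  omega

end Cycle

theorem natCeil_natCast_div_natCast {K : Type*} [Field K] [LinearOrder K] [IsStrictOrderedRing K]
    [FloorSemiring K] (a : ℕ) {b : ℕ} (hb : 0 < b) : ⌈(a / b : K)⌉₊ = a ⌈/⌉ b := by
  refine eq_of_forall_ge_iff fun c => ?_
  rw [Nat.ceil_le, div_le_iff₀' (by exact_mod_cast hb), ceilDiv_le_iff_le_mul hb]
  norm_cast

/-- `γ_oso(C_n) = ⌈2n/3⌉` for `n ≥ 3`. -/
theorem stmt_7 (n : ℕ) (hn : 3 ≤ n) :
    gammaOSO (cycleArc n) = ⌈(2 * (n : ℚ)) / 3⌉₊ := by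
  have : NeZero n := ⟨by omega⟩
  have le_card (T : Finset (Fin n)) (hT : OSODS (cycleArc n) T) : (2 * n) ⌈/⌉ 3 ≤ #T := by
    rw [ceilDiv_le_iff_le_mul three_pos]
    simpa only [Fintype.card_fin] using
      two_mul_card_le_of_two_preds_mem sub_left_injective ((osods_cycleArc_iff hn).1 hT)
  calc
    gammaOSO (cycleArc n) = #(omitEveryThird n) :=
      gammaOSO_eq_card_of_forall_card_le (osods_omitEveryThird hn) fun T hT =>
        card_omitEveryThird n ▸ le_card T hT
    _ = (2 * n) ⌈/⌉ 3 := card_omitEveryThird n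
    _ = ⌈(2 * (n : ℚ)) / 3⌉₊ := by
      simpa using (natCeil_natCast_div_natCast (K := ℚ) (2 * n) three_pos).symm
end

section
/- Let G be a simple graph. Then there exists an orientation D of G such that γ_s(G) = γ_os(D). -/
/-!
An out-secure dominating set of an orientation of `G` is a secure dominating set of `G`, so
`γ_s(G) ≤ γ_os(D)` for every orientation `D`. For equality, take a minimum secure dominating set `S`
and orient every edge between `S` and its complement away from `S`: each vertex of `S` that defends
a vertex outside `S` is then an in-neighbor of it, so `S` is out-secure dominating.
-/

open Finset

variable {V : Type*}

/-- `S` is a dominating set of the simple graph `G`. -/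
def DomSG (G : SimpleGraph V) (S : Finset V) : Prop :=
  ∀ v : V, v ∉ S → ∃ u ∈ S, G.Adj u v

/-- `S` is a secure dominating set of the simple graph `G`. -/
def SDSg [DecidableEq V] (G : SimpleGraph V) (S : Finset V) : Prop :=
  DomSG G S ∧ ∀ v : V, v ∉ S → ∃ u ∈ S, G.Adj u v ∧ DomSG G (insert v (S.erase u))

/-- The secure domination number `γ_s(G)` of a simple graph `G`. -/
noncomputable def gammaSg [Fintype V] [DecidableEq V] (G : SimpleGraph V) : ℕ :=
  sInf {k | ∃ S : Finset V, SDSg G S ∧ S.card = k}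

lemma IsOrientation.domG_iff {G : SimpleGraph V} {A : V → V → Prop} (h : IsOrientation G A)
    (S : Finset V) : DomG A S ↔ DomSG G S := by
  simp only [DomG, DomSG, h.1]

lemma IsOrientation.sdsg_of_osds [DecidableEq V] {G : SimpleGraph V} {A : V → V → Prop}
    {S : Finset V} (h : IsOrientation G A) (hS : OSDS A S) : SDSg G S := by
  refine ⟨(h.domG_iff S).1 hS.1, fun v hv => ?_⟩
  obtain ⟨u, hu, huv, hdom⟩ := hS.2 v hv
  exact ⟨u, hu, (h.1 u v).2 (Or.inl huv), (h.domG_iff _).1 hdom⟩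

lemma IsOrientation.osds_of_sdsg [DecidableEq V] {G : SimpleGraph V} {A : V → V → Prop}
    {S : Finset V} (h : IsOrientation G A) (hout : ∀ u ∈ S, ∀ v ∉ S, G.Adj u v → A u v)
    (hS : SDSg G S) : OSDS A S := by
  refine ⟨(h.domG_iff S).2 hS.1, fun v hv => ?_⟩
  obtain ⟨u, hu, huv, hdom⟩ := hS.2 v hv
  exact ⟨u, hu, hout u hu v hv huv, (h.domG_iff _).2 hdom⟩

lemma sdsg_univ [Fintype V] [DecidableEq V] (G : SimpleGraph V) : SDSg G univ :=
  ⟨fun v hv => absurd (mem_univ v) hv, fun v hv => absurd (mem_univ v) hv⟩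

/-- The arcs obtained from the edges of `G` by directing those between `S` and its complement away
from `S`, and all others along the relation `r`. This orients `G` when `r` is a tournament, that is,
asymmetric and trichotomous. -/
def orientAway (G : SimpleGraph V) (S : Set V) (r : V → V → Prop) (u v : V) : Prop :=
  G.Adj u v ∧ ((u ∈ S ∧ v ∉ S) ∨ ((u ∈ S ↔ v ∈ S) ∧ r u v))

lemma isOrientation_orientAway (G : SimpleGraph V) (S : Set V) (r : V → V → Prop) [Std.Asymm r]
    [Std.Trichotomous r] : IsOrientation G (orientAway G S r) := by
  refine ⟨fun u v => ⟨fun huv => ?_, ?_⟩, ?_⟩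
  · have hr : r u v ∨ r v u := by
      by_contra! hr
      exact huv.ne (Std.Trichotomous.trichotomous u v hr.1 hr.2)
    simp only [orientAway, huv, huv.symm, true_and]
    tauto
  · rintro (huv | hvu)
    exacts [huv.1, hvu.1.symm]
  · rintro u v ⟨-, huv⟩ ⟨-, hvu⟩
    have hr : r u v → ¬ r v u := Std.Asymm.asymm u v
    tauto

lemma exists_isOrientation_away (G : SimpleGraph V) (S : Set V) :
    ∃ A : V → V → Prop, IsOrientation G A ∧ ∀ u ∈ S, ∀ v ∉ S, G.Adj u v → A u v :=
  ⟨orientAway G S WellOrderingRel, isOrientation_orientAway G S WellOrderingRel,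
    fun _ hu _ hv huv => ⟨huv, Or.inl ⟨hu, hv⟩⟩⟩

theorem stmt_11_general [DecidableEq V] (G : SimpleGraph V) (hG : ∃ S : Finset V, SDSg G S) :
    ∃ A : V → V → Prop, IsOrientation G A ∧
      sInf {k | ∃ S : Finset V, SDSg G S ∧ S.card = k} =
        sInf {k | ∃ S : Finset V, OSDS A S ∧ S.card = k} := by
  have hne : {k | ∃ S : Finset V, SDSg G S ∧ S.card = k}.Nonempty :=
    hG.imp' Finset.card fun S hS => ⟨S, hS, rfl⟩
  obtain ⟨S, hS, hcard⟩ := Nat.sInf_mem hne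
  obtain ⟨A, hA, hout⟩ := exists_isOrientation_away G (S : Set V)
  have hOS : OSDS A S := hA.osds_of_sdsg hout hS
  refine ⟨A, hA, le_antisymm ?_ (Nat.sInf_le ⟨S, hOS, hcard⟩)⟩
  refine csInf_le_csInf (OrderBot.bddBelow _) ⟨_, S, hOS, rfl⟩ ?_
  rintro _ ⟨T, hT, rfl⟩
  exact ⟨T, hA.sdsg_of_osds hT, rfl⟩

/-- every simple graph has an orientation `D` with `γ_s(G) = γ_os(D)`. -/
theorem stmt_11 [Fintype V] [DecidableEq V] (G : SimpleGraph V) :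
    ∃ A : V → V → Prop, IsOrientation G A ∧ gammaSg G = gammaOS A :=
  stmt_11_general G ⟨univ, sdsg_univ G⟩
end
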